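/- arXiv:2511.01509 — 2 statements merged into one kernel-verified Lean document; each statement's English description precedes it below -/
import Mathlib

section
/- Let k ≥ 5. For any two distinct nonadjacent vertices u, v of H_k(P_3) with u, v ∈ {a_1, a_3} ∪ C and {u, v} ≠ {a_1, a_3}, the graph H_k(P_3) + uv has a Hamilton cycle (a cycle through all 2k+1 vertices). Moreover, for every z ∈ C there is a path on 2k vertices in H_k(P_3) starting at a_2 and ending at z. -/
open SimpleGraph

/-- The number of edges of a simple graph. -/
noncomputable def edgeCount {V : Type*} (G : SimpleGraph V) : ℕ := G.edgeSet.ncard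

/-- `H` occurs as a subgraph of `G` (there is an injective map preserving adjacency). -/
def ContainsCopy {V W : Type*} (G : SimpleGraph V) (H : SimpleGraph W) : Prop :=
  ∃ f : W → V, Function.Injective f ∧ ∀ a b : W, H.Adj a b → G.Adj (f a) (f b)

/-- The Turán number `ex(n, H)`: the maximum number of edges of an `H`-free
simple graph on `n` vertices. -/
noncomputable def exNum (n : ℕ) {W : Type*} (H : SimpleGraph W) : ℕ :=
  sSup {m | ∃ G : SimpleGraph (Fin n), ¬ ContainsCopy G H ∧ edgeCount G = m}

/-- `h(n,k,a) = C(k-a,2) + a(n-k+a)`. -/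
def hFun (n k a : ℕ) : ℕ := (k - a).choose 2 + a * (n - k + a)

/-- `c(n,m,ℓ) = C(m-1,2) + t·C(ℓ-1,2) + C(r,2)` where `n = (m-1) + t(ℓ-1) + r`,
`0 ≤ r < ℓ-1`. -/
def cFun (n m l : ℕ) : ℕ :=
  (m - 1).choose 2 + ((n - (m - 1)) / (l - 1)) * ((l - 1).choose 2)
    + ((n - (m - 1)) % (l - 1)).choose 2

/-- A graph is 2-connected if it has at least 3 vertices and removing any
single vertex leaves a connected graph. -/
def TwoConnected {V : Type*} [Fintype V] (G : SimpleGraph V) : Prop :=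
  3 ≤ Fintype.card V ∧ ∀ v : V, (G.induce ({v}ᶜ : Set V)).Connected

/-- The circumference of a graph: the length of a longest cycle
(`0` if there is no cycle). -/
noncomputable def circumference {V : Type*} (G : SimpleGraph V) : ℕ :=
  sSup {m | ∃ (v : V) (c : G.Walk v v), c.IsCycle ∧ c.length = m}

/-- The number of neighbours (in `G`) of `x` lying on the walk `p`. -/
noncomputable def degOn {V : Type*} (G : SimpleGraph V) {a b : V} (p : G.Walk a b) (x : V) : ℕ :=
  {v | v ∈ p.support ∧ G.Adj x v}.ncard

/-- The graph obtained from `G` by adding the edge `uv`. -/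
def addEdge {V : Type*} (G : SimpleGraph V) (u v : V) : SimpleGraph V :=
  G ⊔ SimpleGraph.fromEdgeSet {s(u, v)}

/-- The minimum degree of a graph (with classical decidability). -/
noncomputable def minDeg {V : Type*} [Fintype V] (G : SimpleGraph V) : ℕ :=
  @SimpleGraph.minDegree _ G _ (Classical.decRel _)
open SimpleGraph

/-- Membership (as 0-indexed natural) in the set `C` of `H_k(s)`:
`C = {x_{s+1}, x_{s+3}, …, x_{2k-s+1}}` (1-indexed). -/
def inC_HkS (k s i : ℕ) : Prop := s ≤ i ∧ i ≤ 2 * k - s ∧ (i - s) % 2 = 0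

/-- Membership in the set `D` of `H_k(s)`: `D = {x_{s+2}, …, x_{2k-s}}` (1-indexed). -/
def inD_HkS (k s i : ℕ) : Prop := s ≤ i ∧ i ≤ 2 * k - s ∧ (i - s) % 2 = 1

/-- The graph `H_k(s)`: the path `x_1 … x_{2k+1}` (here 0-indexed on `Fin (2k+1)`),
plus all edges inside `A = {x_1,…,x_s}`, all edges inside `B = {x_{2k-s+2},…,x_{2k+1}}`,
and all edges between `A ∪ B` and `C = {x_{s+1}, x_{s+3}, …, x_{2k-s+1}}`. -/
def HkS (k s : ℕ) : SimpleGraph (Fin (2 * k + 1)) :=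
  SimpleGraph.fromRel (fun x y =>
    ((y : ℕ) = (x : ℕ) + 1) ∨
    ((x : ℕ) < s ∧ (y : ℕ) < s) ∨
    (2 * k - s + 1 ≤ (x : ℕ) ∧ 2 * k - s + 1 ≤ (y : ℕ)) ∨
    (((x : ℕ) < s ∨ 2 * k - s + 1 ≤ (x : ℕ)) ∧ inC_HkS k s (y : ℕ)))

/-- Membership in the part `C` (of size `k-1`) of `H_k(M_2)` (0-indexed):
`C = {x_3, x_5, …, x_{2k-1}}` (1-indexed). -/
def inC_HkM2 (k i : ℕ) : Prop := 2 ≤ i ∧ i ≤ 2 * k - 2 ∧ i % 2 = 0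

/-- Membership in `D` of `H_k(M_2)` (0-indexed): `D = {x_4, x_6, …, x_{2k-2}}` (1-indexed). -/
def inD_HkM2 (k i : ℕ) : Prop := 3 ≤ i ∧ i ≤ 2 * k - 3 ∧ i % 2 = 1

/-- The graph `H_k(M_2)`: the complete bipartite graph with parts
`C = {x_3,x_5,…,x_{2k-1}}` (size `k-1`) and `A ∪ B ∪ D` (size `k+2`), where
`A = {x_1,x_2}`, `B = {x_{2k},x_{2k+1}}`, `D = {x_4,…,x_{2k-2}}`, together with the
matching edges `x_1x_2` and `x_{2k}x_{2k+1}` (here 0-indexed on `Fin (2k+1)`). -/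
def HkM2 (k : ℕ) : SimpleGraph (Fin (2 * k + 1)) :=
  SimpleGraph.fromRel (fun x y =>
    ((x : ℕ) = 0 ∧ (y : ℕ) = 1) ∨
    ((x : ℕ) = 2 * k - 1 ∧ (y : ℕ) = 2 * k) ∨
    (inC_HkM2 k (x : ℕ) ∧ ¬ inC_HkM2 k (y : ℕ)))

/-- Membership in the part `B = {b_1, …, b_{k-1}}` of `H_k(P_3)`; on `Fin (2k+1)` we take
`a_1 = 0, a_2 = 1, a_3 = 2`, `B = {3, …, k+1}`, `C = {k+2, …, 2k}`. -/
def inB_HkP3 (k i : ℕ) : Prop := 3 ≤ i ∧ i ≤ k + 1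

/-- Membership in the set `C = {c_1, …, c_{k-1}}` of `H_k(P_3)`. -/
def inC_HkP3 (k i : ℕ) : Prop := k + 2 ≤ i ∧ i ≤ 2 * k

/-- The graph `H_k(P_3)`: the complete bipartite graph `K_{k-1,k+2}` with parts
`B = {b_1,…,b_{k-1}}` and `A ∪ C` where `A = {a_1,a_2,a_3}`, `C = {c_1,…,c_{k-1}}`,
plus the edges `a_1a_2` and `a_2a_3`. Here `a_1 = 0, a_2 = 1, a_3 = 2`,
`B = {3,…,k+1}`, `C = {k+2,…,2k}` on `Fin (2k+1)`. -/
def HkP3 (k : ℕ) : SimpleGraph (Fin (2 * k + 1)) :=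
  SimpleGraph.fromRel (fun x y =>
    ((x : ℕ) = 0 ∧ (y : ℕ) = 1) ∨
    ((x : ℕ) = 1 ∧ (y : ℕ) = 2) ∨
    (inB_HkP3 k (x : ℕ) ∧ ¬ inB_HkP3 k (y : ℕ)))

/-- The graph `F_k(t)`: the path `x_1 … x_{2k+t}` (0-indexed on `Fin (2k+t)`), plus all
edges inside `A = {x_1,…,x_k}`, all edges inside `B = {x_{k+t+1},…,x_{2k+t}}`, all edges
between `x_k` and `B`, and all edges between `x_{k+t+1}` and `A`. -/
def FkT (k t : ℕ) : SimpleGraph (Fin (2 * k + t)) :=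
  SimpleGraph.fromRel (fun x y =>
    ((y : ℕ) = (x : ℕ) + 1) ∨
    ((x : ℕ) < k ∧ (y : ℕ) < k) ∨
    (k + t ≤ (x : ℕ) ∧ k + t ≤ (y : ℕ)) ∨
    ((x : ℕ) = k - 1 ∧ k + t ≤ (y : ℕ)) ∨
    ((x : ℕ) = k + t ∧ (y : ℕ) < k))

/-- The graph `H(n,k,a)`: vertices `{0,…,k-2a-1} = A`, `{k-2a,…,k-a-1} = B`,
`{k-a,…,n-1} = C`; all edges inside `A ∪ B` and all edges between `B` and `C`. -/
def Hgraph (n k a : ℕ) : SimpleGraph (Fin n) :=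
  SimpleGraph.fromRel (fun x y =>
    ((x : ℕ) < k - a ∧ (y : ℕ) < k - a) ∨
    (k - 2 * a ≤ (x : ℕ) ∧ (x : ℕ) < k - a ∧ k - a ≤ (y : ℕ)))

/-- The graph `Z(n,k,t)` (for `n = (k-t-2) + ℓ(t-1) + 2`): two universal mutually adjacent
vertices `0, 1`, a clique `K_{k-t-2}` on `{2,…,k-t-1}`, and consecutive blocks of size
`t-1` on the remaining vertices, each forming a clique `K_{t-1}`. -/
def Zgraph (n k t : ℕ) : SimpleGraph (Fin n) :=
  SimpleGraph.fromRel (fun x y =>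
    ((x : ℕ) < 2) ∨ ((y : ℕ) < 2) ∨
    (2 ≤ (x : ℕ) ∧ (x : ℕ) < k - t ∧ 2 ≤ (y : ℕ) ∧ (y : ℕ) < k - t) ∨
    (k - t ≤ (x : ℕ) ∧ k - t ≤ (y : ℕ) ∧
      ((x : ℕ) - (k - t)) / (t - 1) = ((y : ℕ) - (k - t)) / (t - 1)))

/-!
If `S` and `T` are completely joined and `|T| = |S| + 1`, any two vertices of `T` are joined by a
path alternating between the two sides and covering both. With `S = B` and `T = {a₁} ∪ C` this gives
a path from `a₁` to any `z ∈ C`; prepending `a₂` yields the path on `2k` vertices, and prepending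
`a₃` as well yields a Hamilton path. For distinct `u, v ∈ C`, fix `b ∈ B` and take instead
`S = B \ {b}`, `T = {a₁} ∪ C \ {u}`: a covering path from `a₁` to `v` extends to the Hamilton path
`u b a₃ a₂ a₁ … v`. Adding the edge `uv` closes a Hamilton path from `u` to `v` to a cycle.
-/

section Hamiltonian

variable {V : Type*}

theorem addEdge_comm (G : SimpleGraph V) (u v : V) : addEdge G u v = addEdge G v u := by
  rw [addEdge, addEdge, Sym2.eq_swap]

theorem le_addEdge (G : SimpleGraph V) (u v : V) : G ≤ addEdge G u v :=
  le_sup_left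

theorem addEdge_adj_self (G : SimpleGraph V) {u v : V} (huv : u ≠ v) :
    (addEdge G u v).Adj u v := by
  simp [addEdge, huv]

variable [DecidableEq V] [Fintype V] {G : SimpleGraph V}

theorem exists_isHamiltonianCycle_of_isHamiltonian {u v : V} {p : G.Walk u v}
    (hp : p.IsHamiltonian) (hvu : G.Adj v u) (hV : 3 ≤ Fintype.card V) :
    ∃ (w : V) (c : G.Walk w w), c.IsHamiltonianCycle := by
  have hlen := hp.length_eq
  have hnew : s(v, u) ∉ p.edges := fun hmem ↦ by
    have := hp.isPath.length_eq_one_of_mem_edges (Sym2.eq_swap ▸ hmem)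
    omega
  refine ⟨v, .cons hvu p, Walk.isHamiltonianCycle_iff_isCycle_and_length_eq.mpr
    ⟨(Walk.cons_isCycle_iff p hvu).mpr ⟨hp.isPath, hnew⟩, ?_⟩⟩
  rw [Walk.length_cons]
  omega

theorem exists_isHamiltonianCycle_addEdge {u v : V} {p : G.Walk u v} (hp : p.IsHamiltonian)
    (hV : 3 ≤ Fintype.card V) :
    ∃ (w : V) (c : (addEdge G u v).Walk w w), c.IsHamiltonianCycle := by
  have huv : u ≠ v := by
    rintro rfl
    have := hp.length_eq
    have := Walk.length_eq_zero_iff.mpr (Walk.isPath_iff_nil.mp hp.isPath)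
    omega
  exact exists_isHamiltonianCycle_of_isHamiltonian
    (hp.map (f := .ofLE (le_addEdge G u v)) Function.bijective_id)
    (addEdge_adj_self G huv).symm hV

end Hamiltonian

theorem exists_isPath_of_isCompleteBetween {V : Type*} {G : SimpleGraph V} {S T : Finset V}
    (hST : G.IsCompleteBetween S T) (hcard : T.card = S.card + 1) {x y : V} (hx : x ∈ T)
    (hy : y ∈ T) (hxy : x ≠ y) :
    ∃ p : G.Walk x y, p.IsPath ∧ ∀ w, w ∈ p.support ↔ w ∈ S ∨ w ∈ T := by
  classical
  have hpair : {x, y} ⊆ T := Finset.insert_subset hx (Finset.singleton_subset_iff.mpr hy)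
  have htwo : ({x, y} : Finset V).card = 2 := Finset.card_pair hxy
  induction S using Finset.induction_on generalizing T x with
  | empty =>
    have := Finset.card_le_card hpair
    rw [Finset.card_empty] at hcard
    omega
  | insert s S hs ih =>
    have hdisj : ∀ w ∈ T, w ∉ insert s S := Finset.disjoint_right.mp (mod_cast hST.disjoint)
    have hsT : ∀ t ∈ T, G.Adj s t := fun t ht ↦ hST (Finset.mem_insert_self s S) ht
    rw [Finset.card_insert_of_notMem hs] at hcard
    obtain rfl | hS := S.eq_empty_or_nonempty
    · have hT : {x, y} = T := Finset.eq_of_subset_of_card_le hpair (by simp [hcard, htwo])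
      exact ⟨.cons (hsT x hx).symm (.cons (hsT y hy) .nil),
        by simp [Walk.cons_isPath_iff, (hsT y hy).ne, (hsT x hx).ne', hxy],
        by grind [Walk.support_cons, Walk.support_nil]⟩
    · obtain ⟨t, ht, htxy⟩ : ∃ t ∈ T, t ∉ ({x, y} : Finset V) :=
        Finset.exists_mem_notMem_of_card_lt_card (by have := hS.card_pos; omega)
      have hST' : G.IsCompleteBetween S (T.erase x : Finset V) := fun a ha b hb ↦
        hST (Finset.mem_insert_of_mem ha) (Finset.mem_of_mem_erase hb)
      obtain ⟨p, hp, hsupp⟩ : ∃ p : G.Walk t y, p.IsPath ∧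
          ∀ w, w ∈ p.support ↔ w ∈ S ∨ w ∈ T.erase x := by
        apply ih hST' <;> grind
      have hsp : s ∉ p.support := by grind
      have hxp : x ∉ (Walk.cons (hsT t ht) p).support := by grind [Walk.support_cons]
      exact ⟨.cons (hsT x hx).symm (.cons (hsT t ht) p), (hp.cons hsp).cons hxp,
        by grind [Walk.support_cons]⟩

/-- The shape of `H_k(P_3)`: the vertex set is split into a path `a₁ a₂ a₃` and two parts `B`, `C`
of equal size, with every vertex of `B` adjacent to `a₁`, to `a₃` and to all of `C`. The edges
between `a₂` and `B` are left out, since no Hamilton path below uses them. -/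
structure IsP3Join {V : Type*} [Fintype V] [DecidableEq V] (G : SimpleGraph V) (B C : Finset V)
    (a₁ a₂ a₃ : V) : Prop where
  adj₁₂ : G.Adj a₁ a₂
  adj₂₃ : G.Adj a₂ a₃
  ne₁₃ : a₁ ≠ a₃
  union_eq_compl : B ∪ C = {a₁, a₂, a₃}ᶜ
  isCompleteBetween : G.IsCompleteBetween B (insert a₁ (insert a₃ C) : Finset V)
  card_eq : B.card = C.card

namespace IsP3Join

variable {V : Type*} [Fintype V] [DecidableEq V] {G : SimpleGraph V} {B C : Finset V}
  {a₁ a₂ a₃ : V}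

theorem symm (h : IsP3Join G B C a₁ a₂ a₃) : IsP3Join G B C a₃ a₂ a₁ where
  adj₁₂ := h.adj₂₃.symm
  adj₂₃ := h.adj₁₂.symm
  ne₁₃ := h.ne₁₃.symm
  union_eq_compl := by
    rw [h.union_eq_compl, Finset.insert_comm, Finset.pair_comm, Finset.insert_comm]
  isCompleteBetween := by rw [Finset.insert_comm]; exact h.isCompleteBetween
  card_eq := h.card_eq

theorem mem_or_mem_iff (h : IsP3Join G B C a₁ a₂ a₃) (w : V) :
    w ∈ B ∨ w ∈ C ↔ w ≠ a₁ ∧ w ≠ a₂ ∧ w ≠ a₃ := by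
  rw [← Finset.mem_union, h.union_eq_compl]
  simp

theorem disjoint (h : IsP3Join G B C a₁ a₂ a₃) : Disjoint B C := by
  have := h.isCompleteBetween.disjoint
  rw [Finset.disjoint_coe] at this
  exact this.mono_right (by grind)

theorem exists_isPath_mid (h : IsP3Join G B C a₁ a₂ a₃) {z : V} (hz : z ∈ C) :
    ∃ p : G.Walk a₂ z, p.IsPath ∧ ∀ w, w ∈ p.support ↔ w ≠ a₃ := by
  have hmem := h.mem_or_mem_iff
  have h₁C : a₁ ∉ C := by grind
  obtain ⟨p, hp, hsupp⟩ := exists_isPath_of_isCompleteBetween (S := B) (T := insert a₁ C)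
    (fun b hb c hc ↦ h.isCompleteBetween hb (by grind))
    (by rw [Finset.card_insert_of_notMem h₁C, h.card_eq])
    (Finset.mem_insert_self a₁ C) (Finset.mem_insert_of_mem hz) (by grind)
  exact ⟨.cons h.adj₁₂.symm p, hp.cons (by grind [h.adj₁₂.ne]),
    by grind [Walk.support_cons, h.adj₂₃.ne, h.ne₁₃]⟩

theorem exists_isHamiltonian_of_mem (h : IsP3Join G B C a₁ a₂ a₃) {z : V} (hz : z ∈ C) :
    ∃ p : G.Walk a₃ z, p.IsHamiltonian := by
  obtain ⟨p, hp, hsupp⟩ := h.exists_isPath_mid hz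
  exact ⟨.cons h.adj₂₃.symm p,
    (hp.cons (by simp [hsupp])).isHamiltonian_of_mem (by grind [Walk.support_cons])⟩

theorem exists_isHamiltonian_of_mem_of_mem (h : IsP3Join G B C a₁ a₂ a₃) {u v : V} (hu : u ∈ C)
    (hv : v ∈ C) (huv : u ≠ v) : ∃ p : G.Walk u v, p.IsHamiltonian := by
  have hmem := h.mem_or_mem_iff
  have hdisj := Finset.disjoint_left.mp h.disjoint
  obtain ⟨b, hb⟩ : B.Nonempty := Finset.card_pos.mp (h.card_eq ▸ Finset.card_pos.mpr ⟨u, hu⟩)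
  have hub : G.Adj u b := (h.isCompleteBetween hb (by grind)).symm
  have hb₃ : G.Adj b a₃ := h.isCompleteBetween hb (by grind)
  obtain ⟨p, hp, hsupp⟩ := exists_isPath_of_isCompleteBetween
    (S := B.erase b) (T := insert a₁ (C.erase u)) (x := a₁) (y := v)
    (fun b' hb' c hc ↦ h.isCompleteBetween (by grind) (by grind))
    (by grind [h.card_eq]) (by grind) (by grind) (by grind)
  refine ⟨.cons hub (.cons hb₃ (.cons h.adj₂₃.symm (.cons h.adj₁₂.symm p))),
    Walk.IsPath.isHamiltonian_of_mem ?_ ?_⟩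
  · simp only [Walk.cons_isPath_iff, Walk.support_cons]
    grind [h.adj₁₂.ne, h.adj₂₃.ne, h.ne₁₃]
  · simp only [Walk.support_cons, List.mem_cons]
    grind

end IsP3Join

namespace HkP3

/-- The part `B` of `H_k(P_3)` as a finset. -/
def partB (k : ℕ) : Finset (Fin (2 * k + 1)) :=
  (Finset.Icc 3 (k + 1)).attachFin fun m hm ↦ by rw [Finset.mem_Icc] at hm; omega

/-- The part `C` of `H_k(P_3)` as a finset. -/
def partC (k : ℕ) : Finset (Fin (2 * k + 1)) :=
  (Finset.Icc (k + 2) (2 * k)).attachFin fun m hm ↦ by rw [Finset.mem_Icc] at hm; omega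

variable {k : ℕ}

theorem mem_partB {x : Fin (2 * k + 1)} : x ∈ partB k ↔ inB_HkP3 k x := by
  simp [partB, inB_HkP3]

theorem mem_partC {x : Fin (2 * k + 1)} : x ∈ partC k ↔ inC_HkP3 k x := by
  simp [partC, inC_HkP3]

theorem card_partB : (partB k).card = k - 1 := by
  simp [partB]

theorem card_partC : (partC k).card = k - 1 := by
  rw [partC, Finset.card_attachFin, Nat.card_Icc]
  omega

theorem val_one (hk : 2 ≤ k) : ((1 : Fin (2 * k + 1)) : ℕ) = 1 :=
  Nat.mod_eq_of_lt (show 1 < 2 * k + 1 by omega)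

theorem val_two (hk : 2 ≤ k) : ((2 : Fin (2 * k + 1)) : ℕ) = 2 :=
  Nat.mod_eq_of_lt (show 2 < 2 * k + 1 by omega)

theorem isP3Join (hk : 2 ≤ k) : IsP3Join (HkP3 k) (partB k) (partC k) 0 1 2 where
  adj₁₂ := by rw [HkP3, fromRel_adj, Fin.ne_iff_vne, val_one hk, Fin.val_zero]; simp
  adj₂₃ := by rw [HkP3, fromRel_adj, Fin.ne_iff_vne, val_one hk, val_two hk]; simp
  ne₁₃ := by rw [Fin.ne_iff_vne, val_two hk, Fin.val_zero]; simp
  union_eq_compl := by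
    ext w
    simp only [Finset.mem_union, mem_partB, mem_partC, inB_HkP3, inC_HkP3, Finset.mem_compl,
      Finset.mem_insert, Finset.mem_singleton, Fin.ext_iff, val_one hk, val_two hk, Fin.val_zero]
    omega
  isCompleteBetween := fun b hb c hc ↦ by
    have hbB : inB_HkP3 k b := mem_partB.mp hb
    have hcB : ¬ inB_HkP3 k c := by
      simp only [Finset.coe_insert, Set.mem_insert_iff, Finset.mem_coe, mem_partC, inC_HkP3,
        Fin.ext_iff, val_two hk, Fin.val_zero] at hc
      rw [inB_HkP3]
      omega
    exact (fromRel_adj _ _ _).mpr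
      ⟨fun hbc ↦ hcB (hbc ▸ hbB), .inl (.inr (.inr ⟨hbB, hcB⟩))⟩
  card_eq := card_partB.trans card_partC.symm

theorem two_le_of_inC {i : ℕ} (hi : inC_HkP3 k i) : 2 ≤ k := by
  rw [inC_HkP3] at hi
  omega

theorem exists_isHamiltonian_of_end {u v : Fin (2 * k + 1)}
    (hu : (u : ℕ) = 0 ∨ (u : ℕ) = 2) (hv : inC_HkP3 k v) :
    ∃ p : (HkP3 k).Walk u v, p.IsHamiltonian := by
  have hk := two_le_of_inC hv
  have h := isP3Join hk
  rw [← mem_partC] at hv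
  obtain hu | hu := hu
  · obtain rfl : u = 0 := Fin.ext hu
    exact h.symm.exists_isHamiltonian_of_mem hv
  · obtain rfl : u = 2 := Fin.ext (hu.trans (val_two hk).symm)
    exact h.exists_isHamiltonian_of_mem hv

theorem exists_isHamiltonian_of_inC {u v : Fin (2 * k + 1)} (hu : inC_HkP3 k u)
    (hv : inC_HkP3 k v) (huv : u ≠ v) : ∃ p : (HkP3 k).Walk u v, p.IsHamiltonian :=
  (isP3Join (two_le_of_inC hu)).exists_isHamiltonian_of_mem_of_mem
    (mem_partC.mpr hu) (mem_partC.mpr hv) huv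

theorem exists_isPath_mid {z : Fin (2 * k + 1)} (hz : inC_HkP3 k z) :
    ∃ p : (HkP3 k).Walk 1 z, p.IsPath ∧ p.support.length = 2 * k := by
  obtain ⟨p, hp, hsupp⟩ :=
    (isP3Join (two_le_of_inC hz)).exists_isPath_mid (mem_partC.mpr hz)
  have hset : p.support.toFinset = {2}ᶜ := by
    ext w
    simp [hsupp]
  refine ⟨p, hp, ?_⟩
  rw [← List.toFinset_card_of_nodup hp.support_nodup, hset, Finset.card_compl,
    Finset.card_singleton, Fintype.card_fin, Nat.add_sub_cancel]

end HkP3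

theorem HkP3_add_edge_hamiltonian_general (k : ℕ) :
    (∀ u v : Fin (2 * k + 1), u ≠ v →
      ((u : ℕ) = 0 ∨ (u : ℕ) = 2 ∨ inC_HkP3 k (u : ℕ)) →
      ((v : ℕ) = 0 ∨ (v : ℕ) = 2 ∨ inC_HkP3 k (v : ℕ)) →
      ¬ (((u : ℕ) = 0 ∧ (v : ℕ) = 2) ∨ ((u : ℕ) = 2 ∧ (v : ℕ) = 0)) →
      ∃ (w : Fin (2 * k + 1)) (c : (addEdge (HkP3 k) u v).Walk w w),
        c.IsHamiltonianCycle) ∧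
    (∀ z : Fin (2 * k + 1), inC_HkP3 k (z : ℕ) →
      ∃ p : (HkP3 k).Walk (1 : Fin (2 * k + 1)) z,
        p.IsPath ∧ p.support.length = 2 * k) := by
  refine ⟨fun u v huv hu hv hne ↦ ?_, fun z hz ↦ HkP3.exists_isPath_mid hz⟩
  have huv' := Fin.val_ne_of_ne huv
  have hV : 3 ≤ Fintype.card (Fin (2 * k + 1)) := by rw [Fintype.card_fin]; omega
  rw [← or_assoc] at hu hv
  obtain hu | hu := hu <;> obtain hv | hv := hv
  · omega
  · obtain ⟨p, hp⟩ := HkP3.exists_isHamiltonian_of_end hu hv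
    exact exists_isHamiltonianCycle_addEdge hp hV
  · obtain ⟨p, hp⟩ := HkP3.exists_isHamiltonian_of_end hv hu
    rw [addEdge_comm]
    exact exists_isHamiltonianCycle_addEdge hp hV
  · obtain ⟨p, hp⟩ := HkP3.exists_isHamiltonian_of_inC hu hv huv
    exact exists_isHamiltonianCycle_addEdge hp hV

/-- Let `k ≥ 5`. For any two distinct nonadjacent vertices
`u, v ∈ {a_1, a_3} ∪ C` of `H_k(P_3)` with `{u,v} ≠ {a_1,a_3}` (here `a_1 = 0`,
`a_2 = 1`, `a_3 = 2`), the graph `H_k(P_3) + uv` has a Hamilton cycle. Moreover for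
every `z ∈ C` there is a path on `2k` vertices from `a_2` to `z`. -/
theorem HkP3_add_edge_hamiltonian (k : ℕ) (hk : 5 ≤ k) :
    (∀ u v : Fin (2 * k + 1), u ≠ v → ¬ (HkP3 k).Adj u v →
      ((u : ℕ) = 0 ∨ (u : ℕ) = 2 ∨ inC_HkP3 k (u : ℕ)) →
      ((v : ℕ) = 0 ∨ (v : ℕ) = 2 ∨ inC_HkP3 k (v : ℕ)) →
      ¬ (((u : ℕ) = 0 ∧ (v : ℕ) = 2) ∨ ((u : ℕ) = 2 ∧ (v : ℕ) = 0)) →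
      ∃ (w : Fin (2 * k + 1)) (c : (addEdge (HkP3 k) u v).Walk w w),
        c.IsHamiltonianCycle) ∧
    (∀ z : Fin (2 * k + 1), inC_HkP3 k (z : ℕ) →
      ∃ p : (HkP3 k).Walk (1 : Fin (2 * k + 1)) z,
        p.IsPath ∧ p.support.length = 2 * k) :=
  (HkP3_add_edge_hamiltonian_general k).imp_left fun H u v huv _ ↦ H u v huv
end

section
/- Let k1 ≥ k2 ≥ 2 and let m, n be integers with 2k1 + 2k2 + 2 ≤ m ≤ n. Then h(m, 2k1 + 2k2, k1 + k2 − 1) + ex(n − m, P_{2k2+1}) ≤ h(n, 2k1 + 2k2, k1 + k2 − 1). -/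
open SimpleGraph

/-!
A graph of minimum degree at least `d + 1` contains every tree with `d + 2` vertices: remove a
leaf, embed the remaining tree, and reattach the leaf, for which the used vertices leave room among
the neighbours. Hence a graph avoiding such a tree has a vertex of degree at most `d`, and deleting
vertices of minimum degree one by one gives `ex(n, T) ≤ d n`. On the other hand `h(·, k, a)` grows
with slope `a`, and `2 k₂ - 1 ≤ k₁ + k₂ - 1`.
-/

section TuranNumber

variable {V W : Type*}

theorem containsCopy_iff_isContained {G : SimpleGraph V} {H : SimpleGraph W} :
    ContainsCopy G H ↔ H ⊑ G :=
  ⟨fun ⟨f, hf, hadj⟩ => ⟨⟨⟨f, hadj _ _⟩, hf⟩⟩,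
    fun ⟨f⟩ => ⟨f, f.injective, fun _ _ => f.toHom.map_adj⟩⟩

theorem edgeCount_eq_card_edgeFinset (G : SimpleGraph V) [Fintype G.edgeSet] :
    edgeCount G = G.edgeFinset.card := by
  rw [edgeCount, ← coe_edgeFinset, Set.ncard_coe_finset]

theorem exNum_eq_extremalNumber (n : ℕ) (H : SimpleGraph W) :
    exNum n H = extremalNumber n H := by
  classical
  have hle : extremalNumber n H ∈ upperBounds
      {m | ∃ G : SimpleGraph (Fin n), ¬ ContainsCopy G H ∧ edgeCount G = m} := by
    rintro _ ⟨G, hfree, rfl⟩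
    rw [containsCopy_iff_isContained] at hfree
    simpa [edgeCount_eq_card_edgeFinset] using card_edgeFinset_le_extremalNumber hfree
  refine le_antisymm (csSup_le' hle) (Finset.sup_le fun G hG => le_csSup ⟨_, hle⟩ ⟨G, ?_, ?_⟩)
  · exact containsCopy_iff_isContained.not.2 ((Finset.mem_filter_univ G).1 hG)
  · exact edgeCount_eq_card_edgeFinset G

end TuranNumber

section TreeEmbedding

variable {V W : Type*} {G : SimpleGraph V}

theorem exists_adj_notMem_range_of_card_le_degree [Fintype W] (f : W → V) (x : W)
    [Fintype (G.neighborSet (f x))] (hdeg : Fintype.card W ≤ G.degree (f x)) :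
    ∃ w, G.Adj (f x) w ∧ w ∉ Set.range f := by
  classical
  -- `f x` is in the range of `f` but is not its own neighbour, which makes the inequality strict.
  have hlt : ((Finset.univ.image f).erase (f x)).card < (G.neighborFinset (f x)).card := calc
    _ < (Finset.univ.image f).card :=
      Finset.card_erase_lt_of_mem (Finset.mem_image_of_mem f (Finset.mem_univ x))
    _ ≤ Fintype.card W := Finset.card_image_le
    _ ≤ _ := hdeg
  obtain ⟨w, hadj, hw⟩ := Finset.exists_mem_notMem_of_card_lt_card hlt
  rw [mem_neighborFinset] at hadj
  refine ⟨w, hadj, fun ⟨y, hy⟩ => hw ?_⟩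
  exact Finset.mem_erase.2 ⟨hadj.ne', hy ▸ Finset.mem_image_of_mem f (Finset.mem_univ y)⟩

theorem isContained_of_copy_induce_compl_singleton {H : SimpleGraph W} {v : W}
    (f : Copy (H.induce {v}ᶜ) G) {w : V} (hw : w ∉ Set.range f)
    (hadj : ∀ x : ({v}ᶜ : Set W), H.Adj v x → G.Adj w (f x)) : H ⊑ G := by
  classical
  let g : W → V := fun x => if hx : x = v then w else f ⟨x, hx⟩
  have hgv : g v = w := dif_pos rfl
  have hg {x : W} (hx : x ≠ v) : g x = f ⟨x, hx⟩ := dif_neg hx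
  have hgw {x : W} (hx : x ≠ v) : g x ≠ w := fun h => hw ⟨_, (hg hx).symm.trans h⟩
  have hmap {a b : W} (hab : H.Adj a b) : G.Adj (g a) (g b) := by
    rcases eq_or_ne a v with rfl | ha
    · rw [hgv, hg hab.ne']
      exact hadj _ hab
    rcases eq_or_ne b v with rfl | hb
    · rw [hgv, hg ha]
      exact (hadj _ hab.symm).symm
    · rw [hg ha, hg hb]
      exact f.toHom.map_adj hab
  have hinj : Function.Injective g := by
    intro a b hab
    by_cases ha : a = v <;> by_cases hb : b = v
    · exact ha.trans hb.symm
    · exact absurd (hab.symm.trans (ha ▸ hgv)) (hgw hb)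
    · exact absurd (hab.trans (hb ▸ hgv)) (hgw ha)
    · rw [hg ha, hg hb] at hab
      exact congrArg Subtype.val (f.injective hab)
  exact ⟨⟨⟨g, hmap⟩, hinj⟩⟩

theorem isContained_of_isTree_of_card_le_degree_add_one [Nonempty V] [G.LocallyFinite]
    [Fintype W] {T : SimpleGraph W} (hT : T.IsTree)
    (hdeg : ∀ v, Fintype.card W ≤ G.degree v + 1) : T ⊑ G := by
  classical
  induction hn : Fintype.card W generalizing W with
  | zero =>
    have := Fintype.card_eq_zero_iff.1 hn
    exact .of_isEmpty
  | succ n ih =>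
    rcases subsingleton_or_nontrivial W with hW | hW
    · obtain ⟨v⟩ := ‹Nonempty V›
      exact ⟨⟨fun _ => v, fun h => absurd (Subsingleton.elim _ _) h.ne⟩,
        Function.injective_of_subsingleton _⟩
    obtain ⟨leaf, hleaf⟩ := hT.exists_vert_degree_one_of_nontrivial
    have hcard : Fintype.card ({leaf}ᶜ : Set W) = n := by
      rw [Fintype.card_compl_set, Set.card_singleton, hn, Nat.add_sub_cancel]
    have hT' : (T.induce {leaf}ᶜ).IsTree :=
      ⟨hT.connected.induce_compl_singleton_of_degree_eq_one hleaf, hT.isAcyclic.induce _⟩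
    obtain ⟨f⟩ := ih hT' (fun v => by have := hdeg v; omega) hcard
    obtain ⟨parent, hparent, huniq⟩ := degree_eq_one_iff_existsUnique_adj.1 hleaf
    obtain ⟨w, hadj, hw⟩ := exists_adj_notMem_range_of_card_le_degree (G := G) f
      ⟨parent, hparent.ne'⟩ (by have := hdeg (f ⟨parent, hparent.ne'⟩); omega)
    refine isContained_of_copy_induce_compl_singleton f hw fun x hx => ?_
    obtain rfl : x = ⟨parent, hparent.ne'⟩ := Subtype.ext (huniq x hx)
    exact hadj.symm

end TreeEmbedding

section ExtremalNumber

variable {V W : Type*}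

theorem card_edgeFinset_le_extremalNumber_add_minDegree [Fintype V] [Nonempty V]
    {G : SimpleGraph V} [DecidableRel G.Adj] {H : SimpleGraph W} (hfree : H.Free G) :
    G.edgeFinset.card ≤ extremalNumber (Fintype.card V - 1) H + G.minDegree := by
  classical
  obtain ⟨v, hv⟩ := G.exists_minimal_degree_vertex
  have hdel := card_edgeFinset_deleteIncidenceSet_le_extremalNumber hfree v
  rw [card_edgeFinset_deleteIncidenceSet] at hdel
  omega

theorem extremalNumber_le_mul_of_isTree [Fintype W] {T : SimpleGraph W} (hT : T.IsTree) {d : ℕ}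
    (hW : Fintype.card W ≤ d + 2) (n : ℕ) : extremalNumber n T ≤ d * n := by
  induction n with
  | zero =>
    rw [← Fintype.card_fin 0, extremalNumber_le_iff]
    exact fun G _ _ => by simp [Subsingleton.elim G ⊥]
  | succ n ih =>
    rw [← Fintype.card_fin (n + 1), extremalNumber_le_iff, Fintype.card_fin]
    intro G _ hfree
    have hmin : G.minDegree ≤ d := by
      by_contra! hlt
      refine hfree (isContained_of_isTree_of_card_le_degree_add_one hT fun v => ?_)
      have := G.minDegree_le_degree v
      omega
    calc G.edgeFinset.card
      _ ≤ extremalNumber n T + G.minDegree := by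
        simpa using card_edgeFinset_le_extremalNumber_add_minDegree hfree
      _ ≤ d * n + d := Nat.add_le_add ih hmin
      _ = d * (n + 1) := (Nat.mul_succ d n).symm

end ExtremalNumber

theorem isTree_pathGraph (n : ℕ) : (pathGraph (n + 1)).IsTree := by
  refine isTree_iff_connected_and_card.2 ⟨pathGraph_connected n, le_antisymm ?_
    (pathGraph_connected n).card_vert_le_card_edgeSet_add_one⟩
  have hsub : (pathGraph (n + 1)).edgeSet ⊆
      Set.range fun i : Fin n => s(i.castSucc, i.succ) := by
    refine Sym2.ind fun u v huv => ?_
    rcases pathGraph_adj.1 ((mem_edgeSet _).1 huv) with h | h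
    · exact ⟨⟨u, by omega⟩, Sym2.eq_iff.2 (.inl ⟨rfl, Fin.ext h⟩)⟩
    · exact ⟨⟨v, by omega⟩, Sym2.eq_iff.2 (.inr ⟨rfl, Fin.ext h⟩)⟩
  rw [Nat.card_fin, Nat.add_le_add_iff_right]
  calc Nat.card (pathGraph (n + 1)).edgeSet
    _ ≤ Nat.card (Set.range fun i : Fin n => s(i.castSucc, i.succ)) :=
      Nat.card_mono (Set.finite_range _) hsub
    _ ≤ Nat.card (Fin n) := Finite.card_range_le _
    _ = n := Nat.card_fin n

theorem hFun_add {k m : ℕ} (hkm : k ≤ m) (t a : ℕ) :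
    hFun (m + t) k a = hFun m k a + a * t := by
  have hshift : m + t - k + a = m - k + a + t := by omega
  rw [hFun, hFun, hshift, Nat.mul_add a _ t, Nat.add_assoc]

theorem hFun_exNum_le_hFun_general {W : Type*} [Fintype W] {T : SimpleGraph W} (hT : T.IsTree)
    {a d k m n : ℕ} (hW : Fintype.card W = d + 2) (hda : d ≤ a) (hkm : k ≤ m) (hmn : m ≤ n) :
    hFun m k a + exNum (n - m) T ≤ hFun n k a := calc
  _ = hFun m k a + extremalNumber (n - m) T := by rw [exNum_eq_extremalNumber]
  _ ≤ hFun m k a + d * (n - m) :=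
    Nat.add_le_add_left (extremalNumber_le_mul_of_isTree hT hW.le _) _
  _ ≤ hFun m k a + a * (n - m) := by gcongr
  _ = hFun n k a := by rw [← hFun_add hkm, Nat.add_sub_cancel' hmn]

/-- Let `k1 ≥ k2 ≥ 2` and `2k1 + 2k2 + 2 ≤ m ≤ n`. Then
`h(m, 2k1+2k2, k1+k2-1) + ex(n-m, P_{2k2+1}) ≤ h(n, 2k1+2k2, k1+k2-1)`. -/
theorem hFun_exNum_le_hFun (k1 k2 m n : ℕ) (hk2 : 2 ≤ k2) (hk12 : k2 ≤ k1)
    (hm : 2 * k1 + 2 * k2 + 2 ≤ m) (hmn : m ≤ n) :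
    hFun m (2 * k1 + 2 * k2) (k1 + k2 - 1) + exNum (n - m) (pathGraph (2 * k2 + 1)) ≤
      hFun n (2 * k1 + 2 * k2) (k1 + k2 - 1) := by
  have hcard : Fintype.card (Fin (2 * k2 + 1)) = 2 * k2 - 1 + 2 := by
    rw [Fintype.card_fin]
    omega
  exact hFun_exNum_le_hFun_general (isTree_pathGraph _) hcard (by omega) (by omega) hmn
end
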